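/- Let S be a finite commutative semigroup with identity element 0_S, let T be an irreducible sequence over S of length D(S) − 1, and let U be the sequence consisting of κ(S) − 1 copies of 0_S. Then the sequence T·U of length D(S) + κ(S) − 2 contains no subsequence T' with |T·U| − |T'| = κ(S) and σ(T') = σ(T·U). -/

import Mathlib

namespace EGZ

variable {S : Type}

/-- `rep a n = (n+1)·a`, the (n+1)-fold sum of `a` with itself (defined for semigroups,
where the 0-fold sum is unavailable). -/
def rep [AddCommSemigroup S] (a : S) : ℕ → S
  | 0 => a
  | n + 1 => rep a n + a

/-- The sum of all terms of a sequence (= multiset) over the semigroup `S`, computed in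
`WithZero S` (i.e. `S` with an extra identity element `0` adjoined); the empty sequence
has sum `0`, and a nonempty sequence has sum `↑s` where `s ∈ S` is its genuine sum. -/
def mSum [AddCommSemigroup S] (T : Multiset S) : WithZero S :=
  (T.map (fun s => (s : WithZero S))).sum

/-- `σ(A) = σ(B)`, with the paper's convention: the empty sequence is regarded as having
sum equal to the identity element `e` of `S`, whenever `S` has an identity element. -/
def EqSum [AddCommSemigroup S] (A B : Multiset S) : Prop :=
  mSum A = mSum B ∨
    ∃ e : S, (∀ a : S, e + a = a) ∧
      ((mSum A = 0 ∧ mSum B = (e : WithZero S)) ∨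
        (mSum A = (e : WithZero S) ∧ mSum B = 0))

/-- A sequence `T` over `S` is reducible if some proper subsequence `B` of `T`
satisfies `σ(B) = σ(T)`. -/
def Reducible [AddCommSemigroup S] (T : Multiset S) : Prop :=
  ∃ B : Multiset S, B < T ∧ EqSum B T

/-- The (large) Davenport constant `D(S)`: the smallest `ℓ` such that every sequence over
`S` of length at least `ℓ` is reducible. -/
noncomputable def DavC (S : Type) [AddCommSemigroup S] : ℕ :=
  sInf {ℓ : ℕ | ∀ T : Multiset S, ℓ ≤ Multiset.card T → Reducible T}

/-- The property defining the small Davenport constant: `ℓ` is admissible if for every `m`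
and every `c₁, …, c_m ∈ S` there is `J ⊆ [1, m]` with `|J| ≤ ℓ` and `Σ_{j=1}^m c_j = Σ_{j∈J} c_j`. -/
def SmallDavProp (S : Type) [AddCommSemigroup S] (ℓ : ℕ) : Prop :=
  ∀ (m : ℕ) (c : Fin m → S), ∃ J : Finset (Fin m),
    J.card ≤ ℓ ∧ EqSum (J.val.map c) ((Finset.univ : Finset (Fin m)).val.map c)

/-- The small Davenport constant `d(S)`. -/
noncomputable def smallDavC (S : Type) [AddCommSemigroup S] : ℕ :=
  sInf {ℓ : ℕ | SmallDavProp S ℓ}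

/-- The period of an element `a ∈ S`: the least `t > 0` such that `r·a = (r+t)·a`
for some `r > 0`. -/
noncomputable def period [AddCommSemigroup S] (a : S) : ℕ :=
  sInf {t : ℕ | 0 < t ∧ ∃ k : ℕ, rep a (k + t) = rep a k}

/-- `exp(S)`: the least common multiple of the periods of all elements of `S`. -/
noncomputable def expS (S : Type) [AddCommSemigroup S] [Fintype S] : ℕ :=
  (Finset.univ : Finset S).lcm (fun a => period a)

/-- `κ(S) = ⌈|S| / exp(S)⌉ · exp(S)`. -/
noncomputable def kappa (S : Type) [AddCommSemigroup S] [Fintype S] : ℕ :=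
  ((Fintype.card S + expS S - 1) / expS S) * expS S

/-- `E(S)`: the smallest positive integer `ℓ` such that every sequence `T` over `S` of
length at least `ℓ` contains a subsequence `T'` with `|T| - |T'| = κ(S)` and `σ(T') = σ(T)`. -/
noncomputable def EC (S : Type) [AddCommSemigroup S] [Fintype S] : ℕ :=
  sInf {ℓ : ℕ | 0 < ℓ ∧ ∀ T : Multiset S, ℓ ≤ Multiset.card T →
    ∃ B : Multiset S, B ≤ T ∧ Multiset.card T - Multiset.card B = kappa S ∧ EqSum B T}

end EGZ

namespace EGZ

theorem mSum_cons {S : Type} [AddCommMonoid S] (a : S) (A : Multiset S) :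
    mSum (a ::ₘ A) = ((a + A.sum : S) : WithZero S) := by
  induction A using Multiset.induction_on generalizing a with
  | empty => simp [mSum]
  | cons b A ih =>
    have h : mSum (a ::ₘ b ::ₘ A) = (a : WithZero S) + mSum (b ::ₘ A) := by
      simp [mSum]
    rw [h, ih, Multiset.sum_cons, ← WithZero.coe_add]

theorem mSum_zero {S : Type} [AddCommMonoid S] : mSum (0 : Multiset S) = 0 := by
  simp [mSum]

theorem eqSum_iff {S : Type} [AddCommMonoid S] (A B : Multiset S) :
    EqSum A B ↔ A.sum = B.sum := by
  have he : ∀ e : S, (∀ a : S, e + a = a) ↔ e = 0 := by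
    intro e
    constructor
    · intro h
      simpa using h 0
    · rintro rfl
      simp
  unfold EqSum
  simp only [he, exists_eq_left]
  induction A using Multiset.induction_on with
  | empty =>
    induction B using Multiset.induction_on with
    | empty => simp
    | cons b B _ =>
      simp only [mSum_cons, mSum_zero, Multiset.sum_cons, Multiset.sum_zero,
        WithZero.coe_inj, WithZero.coe_ne_zero, WithZero.zero_ne_coe, true_and, and_false,
        or_false, false_or]
      exact eq_comm
  | cons a A _ =>
    induction B using Multiset.induction_on with
    | empty =>
      simp only [mSum_cons, mSum_zero, Multiset.sum_cons, Multiset.sum_zero,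
        WithZero.coe_inj, WithZero.coe_ne_zero, and_true, false_and, false_or]
    | cons b B _ =>
      simp only [mSum_cons, Multiset.sum_cons, WithZero.coe_inj, WithZero.coe_ne_zero,
        false_and, and_false, or_false]

theorem period_pos {S : Type} [AddCommSemigroup S] [Finite S] (a : S) : 0 < period a := by
  obtain ⟨i, j, hij, h⟩ := Finite.exists_ne_map_eq_of_infinite (rep a)
  have hne : {t : ℕ | 0 < t ∧ ∃ k : ℕ, rep a (k + t) = rep a k}.Nonempty := by
    rcases lt_or_gt_of_ne hij with hl | hl
    · exact ⟨j - i, by omega, i, by rw [show i + (j - i) = j by omega, h]⟩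
    · exact ⟨i - j, by omega, j, by rw [show j + (i - j) = i by omega, h]⟩
  exact (Nat.sInf_mem hne).1

theorem expS_pos (S : Type) [AddCommSemigroup S] [Fintype S] : 0 < expS S := by
  rw [Nat.pos_iff_ne_zero]
  unfold expS
  rw [Ne, Finset.lcm_eq_zero_iff]
  rintro ⟨a, _, ha⟩
  exact (period_pos a).ne' ha

theorem kappa_pos (S : Type) [AddCommSemigroup S] [Fintype S] [Nonempty S] :
    0 < kappa S := by
  have h1 := expS_pos S
  have h2 : 0 < Fintype.card S := Fintype.card_pos
  exact Nat.mul_pos (Nat.div_pos (by omega) h1) h1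

end EGZ

/-- Let `S` be a finite commutative monoid, `T` an irreducible sequence
over `S` of length `D(S) − 1`, and `U` the sequence of `κ(S) − 1` copies of `0_S`.  Then
the sequence `T·U` (of length `D(S) + κ(S) − 2`) contains no subsequence `T'` with
`|T·U| − |T'| = κ(S)` and `σ(T') = σ(T·U)`. -/
theorem extremal_sequence (S : Type) [AddCommMonoid S] [Fintype S]
    (T : Multiset S) (hirr : ¬ EGZ.Reducible T)
    (hlen : Multiset.card T = EGZ.DavC S - 1)
    (U : Multiset S) (hU : U = Multiset.replicate (EGZ.kappa S - 1) (0 : S)) :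
    ¬ ∃ B : Multiset S, B ≤ T + U ∧
      Multiset.card (T + U) - Multiset.card B = EGZ.kappa S ∧ EGZ.EqSum B (T + U) := by
  classical
  rintro ⟨B, hB, hc, hs⟩
  have hk := EGZ.kappa_pos S
  rw [EGZ.eqSum_iff] at hs
  have hU0 : ∀ x ∈ U, x = 0 := by
    rw [hU]
    exact fun x hx => Multiset.eq_of_mem_replicate hx
  have hUs : U.sum = 0 := Multiset.sum_eq_zero hU0
  have hUc : Multiset.card U = EGZ.kappa S - 1 := by rw [hU, Multiset.card_replicate]
  have hI : (B ∩ U).sum = 0 :=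
    Multiset.sum_eq_zero fun x hx => hU0 x (Multiset.mem_inter.1 hx).2
  have hBs : (B - U).sum = B.sum := by
    conv_rhs => rw [← Multiset.sub_add_inter B U]
    rw [Multiset.sum_add, hI, add_zero]
  have hle : B - U ≤ T := by
    rw [Multiset.sub_le_iff_le_add]
    exact hB
  have hcard : Multiset.card (B - U) ≤ Multiset.card B :=
    Multiset.card_le_card (Multiset.sub_le_self B U)
  apply hirr
  refine ⟨B - U, lt_of_le_of_ne hle ?_, ?_⟩
  · intro h
    rw [h] at hcard
    rw [Multiset.card_add] at hc
    omega
  · rw [EGZ.eqSum_iff, hBs, hs, Multiset.sum_add, hUs, add_zero]
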